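/- Let π^0, π^1, …, π^m be ordered partitions of [n] such that for each t, π^{t+1} is obtained from π^t by splitting one cell W into two cells W′ and W″ (replacing W in the sequence by W′ followed by W″, with W = W′ ∪ W″ disjoint and nonempty), with trace element k_t = pos(W,π^t) + |W′|. If π^0 has r cells and π^m is discrete, then m = n − r, the trace elements k_0,…,k_{m−1} are pairwise distinct, and each k_t lies in {2,…,n}. In particular the trace (k_0,…,k_{m−1}) has length at most n − 1 and each of its elements appears exactly once. -/

import Mathlib

/-!
The first positions of the cells of an ordered partition form a set `S(π) ⊆ {1,…,n}`. Splitting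
a cell `W` into `W'`, `W''` adds exactly one new element to this set, the first position of `W''`,
and this is the trace element: it lies strictly between the first position of `W` and that of
the cell following `W`. Hence `S(π^t)` grows with `t`, `k_t ∉ S(π^t)` and `k_t ∈ S(π^{t+1})`, so
no trace element can occur twice (`starts_split`, `notMem_starts_split`). The length of the
sequence comes from counting cells: each step adds one cell, and a discrete partition has `n`
cells because the cell sizes sum to `n` (`OrderedPartition.sum_card`).
-/

/-- An ordered partition of `[n] = {1,…,n}` (modeled as `Fin n`): a list of pairwise
disjoint nonempty cells whose union is everything. -/
structure OrderedPartition (n : ℕ) where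
  cells : List (Finset (Fin n))
  nonempty : ∀ W ∈ cells, W.Nonempty
  pairwiseDisjoint : cells.Pairwise Disjoint
  covers : ∀ v : Fin n, ∃ W ∈ cells, v ∈ W

/-- `pos(v,π) = 1 + Σ_{i<k} |W_i|` where `W_k` is the cell containing `v`. -/
def OrderedPartition.pos {n : ℕ} (π : OrderedPartition n) (v : Fin n) : ℕ :=
  1 + ((π.cells.takeWhile (fun W => decide (v ∉ W))).map Finset.card).sum

/-- The set of first positions of consecutive blocks with sizes given by the list, when the
first block starts at position `c`. -/
def starts : ℕ → List ℕ → Finset ℕ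
  | _, [] => ∅
  | c, x :: l => insert c (starts (c + x) l)

theorem starts_append (c : ℕ) (a b : List ℕ) :
    starts c (a ++ b) = starts c a ∪ starts (c + a.sum) b := by
  induction a generalizing c with
  | nil => simp [starts]
  | cons x l ih => simp [starts, ih, add_assoc]

theorem le_of_mem_starts {c s : ℕ} {a : List ℕ} (h : s ∈ starts c a) :
    c ≤ s ∧ s ≤ c + a.sum := by
  induction a generalizing c with
  | nil => simp [starts] at h
  | cons x l ih =>
    simp only [starts, Finset.mem_insert] at h
    simp only [List.sum_cons]
    rcases h with h | h
    · omega
    · have := ih h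
      omega

theorem starts_split (c x y : ℕ) (a b : List ℕ) :
    starts c (a ++ x :: y :: b) =
      insert (c + a.sum + x) (starts c (a ++ (x + y) :: b)) := by
  simp only [starts_append, starts, ← add_assoc]
  ext s
  simp only [Finset.mem_union, Finset.mem_insert]
  tauto

theorem notMem_starts_split {c x y : ℕ} (hx : 0 < x) (hy : 0 < y) (a b : List ℕ) :
    c + a.sum + x ∉ starts c (a ++ (x + y) :: b) := by
  simp only [starts_append, starts, Finset.mem_union, Finset.mem_insert, not_or]
  refine ⟨fun h => ?_, by omega, fun h => ?_⟩
  · have := le_of_mem_starts h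
    omega
  · have := le_of_mem_starts h
    omega

theorem exists_union_card {α : Type*} [DecidableEq α] (L : List (Finset α))
    (hL : L.Pairwise Disjoint) :
    ∃ U : Finset α, (∀ v, v ∈ U ↔ ∃ W ∈ L, v ∈ W) ∧ U.card = (L.map Finset.card).sum := by
  induction L with
  | nil => exact ⟨∅, by simp, by simp⟩
  | cons X L ih =>
    obtain ⟨hX, hL⟩ := List.pairwise_cons.1 hL
    obtain ⟨U, hU, hc⟩ := ih hL
    refine ⟨X ∪ U, by simp [hU], ?_⟩
    rw [Finset.card_union_of_disjoint, hc, List.map_cons, List.sum_cons]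
    rw [Finset.disjoint_left]
    intro v hv hvU
    obtain ⟨W, hW, hvW⟩ := (hU v).1 hvU
    exact Finset.disjoint_left.1 (hX W hW) hv hvW

theorem OrderedPartition.sum_card {n : ℕ} (π : OrderedPartition n) :
    (π.cells.map Finset.card).sum = n := by
  obtain ⟨U, hU, hc⟩ := exists_union_card π.cells π.pairwiseDisjoint
  have : U = Finset.univ := Finset.eq_univ_of_forall fun v => (hU v).2 (π.covers v)
  rw [← hc, this, Finset.card_univ, Fintype.card_fin]

/-- For a sequence of ordered partitions `π^0,…,π^m` of `[n]` where each step splits one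
cell `W` into `W'` followed by `W''`, with trace element `k_t = pos(W,π^t) + |W'|`:
if `π^0` has `r` cells and `π^m` is discrete then `m = n - r`, the trace elements are
pairwise distinct, each lies in `{2,…,n}`, and the trace has length at most `n - 1`. -/
theorem trace_of_splitting_sequence {n m r : ℕ}
    (π : Fin (m + 1) → OrderedPartition n) (k : Fin m → ℕ)
    (hstep : ∀ t : Fin m, ∃ (l1 l2 : List (Finset (Fin n))) (W W' W'' : Finset (Fin n)),
      (π t.castSucc).cells = l1 ++ W :: l2 ∧
      (π t.succ).cells = l1 ++ W' :: W'' :: l2 ∧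
      W = W' ∪ W'' ∧ Disjoint W' W'' ∧ W'.Nonempty ∧ W''.Nonempty ∧
      k t = (1 + (l1.map Finset.card).sum) + W'.card)
    (hr : (π 0).cells.length = r)
    (hdisc : ∀ W ∈ (π (Fin.last m)).cells, W.card = 1) :
    m = n - r ∧ m ≤ n - 1 ∧ Function.Injective k ∧
      ∀ t : Fin m, 2 ≤ k t ∧ k t ≤ n := by
  have hlen : ∀ t : Fin (m + 1), (π t).cells.length = r + t := by
    intro t
    induction t using Fin.induction with
    | zero => simpa using hr
    | succ t ih =>
      obtain ⟨l1, l2, W, W', W'', h1, h2, -⟩ := hstep t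
      rw [h1] at ih
      rw [h2]
      simp only [List.length_append, List.length_cons, Fin.val_castSucc, Fin.val_succ] at ih ⊢
      omega
  have hn : n = r + m := by
    have hones : (π (Fin.last m)).cells.map Finset.card =
        List.replicate (π (Fin.last m)).cells.length 1 :=
      List.eq_replicate_iff.2 ⟨by simp, by simpa using hdisc⟩
    have hsum := (π (Fin.last m)).sum_card
    rw [hones, hlen] at hsum
    simpa using hsum.symm
  -- A partition with no cells forces `n = 0`.
  have hr0 : r = 0 → n = 0 := by
    intro h
    have hsum := (π 0).sum_card
    rw [List.length_eq_zero_iff.1 (hr.trans h)] at hsum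
    simpa using hsum.symm
  let S : Fin (m + 1) → Finset ℕ := fun t => starts 1 ((π t).cells.map Finset.card)
  have hS : ∀ t : Fin m, S t.succ = insert (k t) (S t.castSucc) ∧ k t ∉ S t.castSucc ∧
      2 ≤ k t ∧ k t ≤ n := by
    intro t
    obtain ⟨l1, l2, W, W', W'', h1, h2, hW, hd, hW', hW'', hk⟩ := hstep t
    have hcard : W.card = W'.card + W''.card := by
      rw [hW, Finset.card_union_of_disjoint hd]
    have hsum := (π t.castSucc).sum_card
    have hp' := hW'.card_pos
    have hp'' := hW''.card_pos
    simp only [S, h1, h2, List.map_append, List.map_cons, hcard, hk]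
    refine ⟨starts_split _ _ _ _ _, notMem_starts_split hp' hp'' _ _, by omega, ?_⟩
    simp only [h1, List.map_append, List.map_cons, List.sum_append, List.sum_cons] at hsum
    omega
  have hmono : Monotone S := Fin.monotone_iff_le_succ.2 fun t => by
    rw [(hS t).1]
    exact Finset.subset_insert _ _
  have hne : ∀ t u : Fin m, t < u → k t ≠ k u := by
    intro t u htu heq
    have hmem : k t ∈ S t.succ := by
      rw [(hS t).1]
      exact Finset.mem_insert_self _ _
    have hle : t.succ ≤ u.castSucc := Fin.succ_le_castSucc_iff.2 htu
    exact (hS u).2.1 (heq ▸ hmono hle hmem)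
  refine ⟨by omega, by omega, fun t u heq => ?_, fun t => (hS t).2.2⟩
  rcases lt_trichotomy t u with h | h | h
  · exact absurd heq (hne t u h)
  · exact h
  · exact absurd heq.symm (hne u t h)
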